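/- arXiv:1812.05680 — 2 statements merged into one kernel-verified Lean document; each statement's English description precedes it below -/
import Mathlib

section
/- In a rank-one recursion B_{n+1} = B_n s^{a(n,0)} B_n ... B_n s^{a(n,q_n-1)} where the limit sequence ω = lim B_n is periodic with minimal period P not consisting only of s's, and |B_N| > |P|: if B_n s^j B_n and B_n s^{j'} B_n both appear explicitly in B_{n+1} for some n ≥ N with j ≤ j', then j = j'. (All explicit spacer gaps between consecutive B_n's are equal.) -/
/-- The two-letter alphabet `{0, s}` used in rank-one constructions. -/
inductive BVSym : Type
  | zero : BVSym
  | sp : BVSym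
  deriving DecidableEq, Inhabited

/-!
Let `c` be the least period of `ω`. Two occurrences of a word of length at least `c` differ by a
period of `ω`, hence by a multiple of `c`; so an occurrence of `B s^j B` forces `c ∣ |B| + j`, and
all gaps agree modulo `c`. Moreover `j < c`, because `c` consecutive letters `s` would make `ω`
constantly `s`. Two numbers below `c` that agree modulo `c` are equal.
-/

section

variable {α : Type*} {ω : ℕ → α} {c d : ℕ}

theorem eq_of_periodic_of_modEq {k l : ℕ} (hper : Function.Periodic ω c) (h : k ≡ l [MOD c]) :
    ω k = ω l := by
  rw [← hper.map_mod_nat k, h, hper.map_mod_nat]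

theorem exists_lt_add_modEq (hc : 0 < c) (p n : ℕ) : ∃ i < c, p + i ≡ n [MOD c] := by
  have : NeZero c := ⟨hc.ne'⟩
  refine ⟨((n : ZMod c) - p).val, ZMod.val_lt _, ?_⟩
  rw [← ZMod.natCast_eq_natCast_iff]
  simp

/-- `c` is the length of a shortest block whose infinite repetition is `ω`; periods are required to
be positive because every sequence has period `0`. -/
def IsLeastPeriod (ω : ℕ → α) (c : ℕ) : Prop :=
  IsLeast {d | 0 < d ∧ Function.Periodic ω d} c

namespace IsLeastPeriod

theorem pos (hc : IsLeastPeriod ω c) : 0 < c := hc.1.1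

theorem periodic (hc : IsLeastPeriod ω c) : Function.Periodic ω c := hc.1.2

theorem dvd_of_periodic (hc : IsLeastPeriod ω c) (hd : Function.Periodic ω d) : c ∣ d := by
  have hmod : Function.Periodic ω (d % c) := fun n =>
    calc ω (n + d % c) = ω (n + d) :=
          eq_of_periodic_of_modEq hc.periodic ((Nat.mod_modEq d c).add_left n)
      _ = ω n := hd n
  by_contra hdvd
  exact (Nat.mod_lt d hc.pos).not_ge (hc.2 ⟨Nat.emod_pos_of_not_dvd hdvd, hmod⟩)

end IsLeastPeriod

theorem periodic_of_eq_getD_mod {P : List α} {a : α}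
    (hP : ∀ n, ω n = P.getD (n % P.length) a) : Function.Periodic ω P.length := fun n => by
  rw [hP, hP n, Nat.add_mod_right]

theorem apply_zero_eq_of_head? {P : List α} {a b : α}
    (hP : ∀ n, ω n = P.getD (n % P.length) a) (hb : P.head? = some b) : ω 0 = b := by
  rw [hP 0, Nat.zero_mod, List.getD_eq_getElem?_getD, ← List.head?_eq_getElem?, hb,
    Option.getD_some]

theorem eq_getD_mod_of_periodic (hd : 0 < d) (hper : Function.Periodic ω d) (a : α) (n : ℕ) :
    ω n = ((List.range d).map ω).getD (n % d) a := by
  rw [List.getD_eq_getElem _ _ (by simpa using Nat.mod_lt n hd), List.getElem_map,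
    List.getElem_range, hper.map_mod_nat]

theorem isLeastPeriod_length {P : List α} {a : α} (hne : P ≠ [])
    (hP : ∀ n, ω n = P.getD (n % P.length) a)
    (hmin : ∀ Q : List α, Q ≠ [] → (∀ n, ω n = Q.getD (n % Q.length) a) →
      P.length ≤ Q.length) :
    IsLeastPeriod ω P.length := by
  refine ⟨⟨List.length_pos_of_ne_nil hne, periodic_of_eq_getD_mod hP⟩, ?_⟩
  rintro d ⟨hd, hper⟩
  simpa using hmin ((List.range d).map ω) (by simpa using hd.ne')
    (by simpa using eq_getD_mod_of_periodic hd hper a)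

/-- The finite word `w` is read in `ω` starting at position `p`, counted from `0`. -/
def OccursAt (ω : ℕ → α) (w : List α) (p : ℕ) : Prop :=
  ∀ (i : ℕ) (hi : i < w.length), ω (p + i) = w[i]

namespace OccursAt

variable {s : α} {u v w : List α} {p j : ℕ}

theorem of_eq_getD {a : α} (h : ∀ i < w.length, ω (p + i) = w.getD i a) :
    OccursAt ω w p := fun i hi => by
  rw [h i hi, List.getD_eq_getElem _ _ hi]

theorem left_of_append (h : OccursAt ω (u ++ v) p) : OccursAt ω u p := fun i hi => by
  rw [h i (by simp only [List.length_append]; omega), List.getElem_append_left hi]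

theorem right_of_append (h : OccursAt ω (u ++ v) p) : OccursAt ω v (p + u.length) :=
  fun i hi => by
    rw [add_assoc, h (u.length + i) (by simpa using hi), List.getElem_append_right (by simp)]
    simp only [Nat.add_sub_cancel_left]

theorem periodic_of_add (hw : OccursAt ω w p) (hw' : OccursAt ω w (p + d)) (hc : 0 < c)
    (hper : Function.Periodic ω c) (hlen : c ≤ w.length) : Function.Periodic ω d := fun n => by
  obtain ⟨i, hi, hmod⟩ := exists_lt_add_modEq hc p n
  have hi' : i < w.length := hi.trans_le hlen
  calc ω (n + d) = ω (p + i + d) := eq_of_periodic_of_modEq hper (hmod.symm.add_right d)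
    _ = w[i] := by rw [add_right_comm, hw' i hi']
    _ = ω (p + i) := (hw i hi').symm
    _ = ω n := eq_of_periodic_of_modEq hper hmod

theorem dvd_length_add_length (h : OccursAt ω (w ++ u ++ w) p) (hc : IsLeastPeriod ω c)
    (hlen : c ≤ w.length) : c ∣ w.length + u.length := by
  have hright : OccursAt ω w (p + (w.length + u.length)) := by
    simpa only [List.length_append] using h.right_of_append
  exact hc.dvd_of_periodic
    (h.left_of_append.left_of_append.periodic_of_add hright hc.pos hc.periodic hlen)

theorem lt_of_replicate (h : OccursAt ω (List.replicate j s) p) (hc : 0 < c)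
    (hper : Function.Periodic ω c) (hs : ∃ n, ω n ≠ s) : j < c := by
  obtain ⟨n, hn⟩ := hs
  obtain ⟨i, hi, hmod⟩ := exists_lt_add_modEq hc p n
  by_contra! hcj
  apply hn
  calc ω n = ω (p + i) := eq_of_periodic_of_modEq hper hmod.symm
    _ = s := by rw [h i (by simpa using hi.trans_le hcj), List.getElem_replicate]

end OccursAt

theorem explicit_spacer_gaps_equal_general {s : α} (hc : IsLeastPeriod ω c)
    (hs : ∃ n, ω n ≠ s) {B : List α} (hlen : c ≤ B.length) {j j' p p' : ℕ}
    (hocc : OccursAt ω (B ++ List.replicate j s ++ B) p)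
    (hocc' : OccursAt ω (B ++ List.replicate j' s ++ B) p') : j = j' := by
  have gap_lt : ∀ {k q : ℕ}, OccursAt ω (B ++ List.replicate k s ++ B) q → k < c :=
    fun h => h.left_of_append.right_of_append.lt_of_replicate hc.pos hc.periodic hs
  have dvd_gap : ∀ {k q : ℕ}, OccursAt ω (B ++ List.replicate k s ++ B) q → c ∣ B.length + k :=
    fun h => by simpa only [List.length_replicate] using h.dvd_length_add_length hc hlen
  have hmod : B.length + j ≡ B.length + j' [MOD c] :=
    (Nat.modEq_zero_iff_dvd.2 (dvd_gap hocc)).trans (Nat.modEq_zero_iff_dvd.2 (dvd_gap hocc')).symm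
  exact (Nat.ModEq.add_left_cancel' _ hmod).eq_of_lt_of_lt (gap_lt hocc) (gap_lt hocc')

end

/-- If `ω = PPP…` with minimal period block `P` beginning with `0`, `B` is a prefix
of `ω` longer than `P`, and `B s^j B`, `B s^{j'} B` both appear explicitly in `ω`
(at positions that are multiples of `|P|`), then `j = j'`. -/
theorem explicit_spacer_gaps_equal (P : List BVSym) (hP : P ≠ [])
    (hhead : P.head? = some BVSym.zero) (ω : ℕ → BVSym)
    (hω : ∀ n, ω n = P.getD (n % P.length) default)
    (hmin : ∀ Q : List BVSym, Q ≠ [] →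
      (∀ n, ω n = Q.getD (n % Q.length) default) → P.length ≤ Q.length)
    (B : List BVSym) (hlen : P.length < B.length)
    (hBpre : ∀ i < B.length, ω i = B.getD i default)
    (j j' : ℕ) (hjj' : j ≤ j') (p p' : ℕ)
    (hp : P.length ∣ p) (hp' : P.length ∣ p')
    (hocc : ∀ i < (B ++ List.replicate j BVSym.sp ++ B).length,
      ω (p + i) = (B ++ List.replicate j BVSym.sp ++ B).getD i default)
    (hocc' : ∀ i < (B ++ List.replicate j' BVSym.sp ++ B).length,
      ω (p' + i) = (B ++ List.replicate j' BVSym.sp ++ B).getD i default) :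
    j = j' := by
  exact explicit_spacer_gaps_equal_general (isLeastPeriod_length hP hω hmin)
    ⟨0, by simp [apply_zero_eq_of_head? hω hhead]⟩ hlen.le (.of_eq_getD hocc) (.of_eq_getD hocc')
end

section
/- If levels n and n+1 of a Bratteli–Vershik recursion are both semi k-periodic with the same repeating block U (U_n = U_{n+1} = U, U not beginning or ending with the spacer symbol), then the spacer counts agree: c_{n+1} = c_n. Concretely: if W = (U s^{c})^{t} U s^{l} with l ≤ c and W = (U s^{c'})^{t'} U s^{l'} with l' ≤ c', t, t' ≥ 1, and U nonempty not beginning or ending with s, then c = c' (and hence t = t', l = l'). -/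
/-- `wpow w i` is the `i`-fold concatenation of the word `w` with itself. -/
def wpow {A : Type*} (w : List A) (i : ℕ) : List A := (List.replicate i w).flatten

/-!
The word `(U s^c)^t U s^l` is the concatenation of the blocks `U s^n` with `n` running through the
sequence `c, …, c, l`. Any concatenation of such blocks can be parsed from left to right: after
removing a copy of `U`, the next spacer count is the length of the initial run of `s`, because what
comes after this run is either empty or starts with the first letter of `U`. So the word determines
the whole sequence `c, …, c, l`.
-/

theorem replicate_append_inj {A : Type*} {s : A} {X Y : List A} (hX : X.head? ≠ some s)
    (hY : Y.head? ≠ some s) {m n : ℕ}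
    (h : List.replicate m s ++ X = List.replicate n s ++ Y) : m = n ∧ X = Y := by
  induction m generalizing n with
  | zero =>
    cases n with
    | zero => exact ⟨rfl, h⟩
    | succ n => exact absurd (congrArg List.head? h) hX
  | succ m ih =>
    cases n with
    | zero => exact absurd (congrArg List.head? h).symm hY
    | succ n =>
      obtain ⟨hmn, hXY⟩ := ih (List.cons.inj h).2
      exact ⟨congrArg Nat.succ hmn, hXY⟩

/-- The word `U s^{c₁} U s^{c₂} ⋯ U s^{cₖ}` built from the block `U`, the spacer symbol `s` and the
list `[c₁, …, cₖ]` of spacer counts. It puts semi-periodic words among words with arbitrary spacer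
counts, where they can be parsed one block at a time. -/
def spacedWord {A : Type*} (U : List A) (s : A) (cs : List ℕ) : List A :=
  cs.flatMap fun c => U ++ List.replicate c s

section spacedWord

variable {A : Type*} {s : A} {U : List A}

theorem spacedWord_cons (c : ℕ) (cs : List ℕ) :
    spacedWord U s (c :: cs) = U ++ (List.replicate c s ++ spacedWord U s cs) := by
  simp [spacedWord]

theorem spacedWord_replicate_append_singleton (c t l : ℕ) :
    spacedWord U s (List.replicate t c ++ [l])
      = wpow (U ++ List.replicate c s) t ++ U ++ List.replicate l s := by
  simp [spacedWord, wpow, List.flatMap_def]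

theorem spacedWord_cons_ne_nil (hU : U ≠ []) (c : ℕ) (cs : List ℕ) :
    spacedWord U s (c :: cs) ≠ [] := by
  simp [spacedWord_cons, hU]

theorem head?_spacedWord_ne (hU : U ≠ []) (hUhead : U.head? ≠ some s) (cs : List ℕ) :
    (spacedWord U s cs).head? ≠ some s := by
  cases cs with
  | nil => simp [spacedWord]
  | cons c cs => rwa [spacedWord_cons, List.head?_append_of_ne_nil _ hU]

theorem spacedWord_injective (hU : U ≠ []) (hUhead : U.head? ≠ some s) :
    Function.Injective (spacedWord U s) := by
  intro cs
  induction cs with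
  | nil =>
    rintro (_ | ⟨d, ds⟩) h
    · rfl
    · exact absurd h.symm (spacedWord_cons_ne_nil hU d ds)
  | cons c cs ih =>
    rintro (_ | ⟨d, ds⟩) h
    · exact absurd h (spacedWord_cons_ne_nil hU c cs)
    · rw [spacedWord_cons, spacedWord_cons] at h
      obtain ⟨hcd, hrest⟩ := replicate_append_inj (head?_spacedWord_ne hU hUhead cs)
        (head?_spacedWord_ne hU hUhead ds) (List.append_cancel_left h)
      rw [hcd, ih hrest]

end spacedWord

theorem semi_periodic_decomposition_unique_general {A : Type*} (s : A) (U : List A)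
    (hU : U ≠ []) (hUhead : U.head? ≠ some s) (c c' t t' l l' : ℕ) (ht : 1 ≤ t)
    (heq : wpow (U ++ List.replicate c s) t ++ U ++ List.replicate l s
      = wpow (U ++ List.replicate c' s) t' ++ U ++ List.replicate l' s) :
    c = c' ∧ t = t' ∧ l = l' := by
  rw [← spacedWord_replicate_append_singleton, ← spacedWord_replicate_append_singleton] at heq
  have hcounts : List.replicate t c ++ [l] = List.replicate t' c' ++ [l'] :=
    spacedWord_injective hU hUhead heq
  obtain ⟨hrep, hlast⟩ := List.append_inj' hcounts rfl
  obtain ⟨htt', ht0 | hcc'⟩ := List.replicate_inj.mp hrep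
  · omega
  · exact ⟨hcc', htt', List.singleton_inj.mp hlast⟩

/-- Uniqueness of the semi-periodic decomposition: if
`W = (U s^c)^t U s^l = (U s^{c'})^{t'} U s^{l'}` with `l ≤ c`, `l' ≤ c'`,
`t, t' ≥ 1` and `U` nonempty not beginning or ending with `s`, then
`c = c'`, `t = t'` and `l = l'`. -/
theorem semi_periodic_decomposition_unique {A : Type*} (s : A) (U : List A)
    (hU : U ≠ []) (hUhead : U.head? ≠ some s) (hUlast : U.getLast? ≠ some s)
    (c c' t t' l l' : ℕ) (ht : 1 ≤ t) (ht' : 1 ≤ t')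
    (hl : l ≤ c) (hl' : l' ≤ c')
    (heq : wpow (U ++ List.replicate c s) t ++ U ++ List.replicate l s
      = wpow (U ++ List.replicate c' s) t' ++ U ++ List.replicate l' s) :
    c = c' ∧ t = t' ∧ l = l' :=
  semi_periodic_decomposition_unique_general s U hU hUhead c c' t t' l l' ht heq
end
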